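/- arXiv:1506.06284 — 2 statements merged into one kernel-verified Lean document; each statement's English description precedes it below -/
import Mathlib

section
/- For any integer t with 1 ≤ t ≤ ⌊n/2⌋ + 1, the cardinality of any pair of antichains (T', T'') ∈ 𝒜'_t satisfies |T'| + |T''| ≤ C(n+1, t), where C(a,b) denotes the binomial coefficient. -/
/-!
Since `t` lies at or just past the middle of `0, …, n + 1`, the binomial coefficient
`C(n+1, t)` dominates all `C(n+1, k)` with `k ≤ t`; by the LYM inequality an antichain of subsets
of an `(n+1)`-element set, all of size at most `t`, therefore has at most `C(n+1, t)` members.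

A pair `T' < T''` turns into one antichain of `Bⁿ⁺¹` by appending `1` to the tuples of `T'` and `0`
to those of `T''`. This raises the weight of `T'`, so the tuples of `T'` of the maximal weight `t`
are first moved into `T''`: being maximal and not above any tuple of `T''`, they keep `T''` an
antichain, and they are not below any remaining tuple of `T'`. After this change all appended
tuples have weight at most `t`.

Tuples are represented by their supports, and `Bⁿ⁺¹` by `Finset (Option (Fin n))`.
-/

/-- The weight of a binary tuple: the number of its 1-components. -/
def bweight {n : ℕ} (α : Fin n → Bool) : ℕ :=
  (Finset.univ.filter fun i => α i = true).card

/-- The tuple `γ_s ∈ Bⁿ` whose first `n - s` components equal `0` and whose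
last `s` components equal `1`. -/
def gammaTuple (n s : ℕ) : Fin n → Bool := fun i => decide (n - s ≤ (i : ℕ))

/-- `T' < T''`: there are no tuples `a ∈ T'`, `b ∈ T''` with `a ≥ b`. -/
def PairBelow {n : ℕ} (T' T'' : Set (Fin n → Bool)) : Prop :=
  ∀ a ∈ T', ∀ b ∈ T'', ¬ b ≤ a

/-- A pair `(T', T'')` of antichains in `Bⁿ` with `T' < T''`. -/
def AntichainPair {n : ℕ} (T' T'' : Set (Fin n → Bool)) : Prop :=
  IsAntichain (· ≤ ·) T' ∧ IsAntichain (· ≤ ·) T'' ∧ PairBelow T' T''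

/-- Membership of a pair of antichains in `𝒜_s`: a pair of antichains with
`T' < T''` and `γ_s ∈ T'`. -/
def MemA {n : ℕ} (s : ℕ) (T' T'' : Set (Fin n → Bool)) : Prop :=
  AntichainPair T' T'' ∧ gammaTuple n s ∈ T'

/-- Membership of a pair of antichains in `𝒜'_t`: a pair of antichains with
`T' < T''` in which every tuple has weight at most `t`. -/
def MemA' {n : ℕ} (t : ℕ) (T' T'' : Set (Fin n → Bool)) : Prop :=
  AntichainPair T' T'' ∧ ∀ α ∈ T' ∪ T'', bweight α ≤ t

open Finset

/-- `k ↦ C(m, k)` is dominated by its value at `t` on `k ≤ t`, as long as `t ≤ ⌈m/2⌉`. -/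
lemma choose_le_choose_of_le_ceil_half {m k t : ℕ} (hkt : k ≤ t) (ht : t ≤ (m + 1) / 2) :
    m.choose k ≤ m.choose t := by
  by_cases h : t ≤ m / 2
  · induction t, hkt using Nat.le_induction with
    | base => exact le_rfl
    | succ j hj ih =>
      exact (ih (by omega) (by omega)).trans (Nat.choose_le_succ_of_lt_half_left (by omega))
  · -- Here `m` is odd and `t` is the upper of its two central indices.
    have e : m.choose t = m.choose (m / 2) := Nat.choose_symm_of_eq_add (by omega)
    exact e ▸ Nat.choose_le_middle k m

/-- The LYM inequality for an antichain all of whose members have size at most `t`. -/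
lemma card_antichain_le_choose {α : Type*} [Fintype α] {t : ℕ}
    (ht : t ≤ (Fintype.card α + 1) / 2) (𝒜 : Finset (Finset α))
    (h𝒜 : IsAntichain (· ⊆ ·) (𝒜 : Set (Finset α))) (hcard : ∀ s ∈ 𝒜, #s ≤ t) :
    #𝒜 ≤ (Fintype.card α).choose t := by
  have pos : 0 < ((Fintype.card α).choose t : ℚ) := by
    by_cases h : t ≤ Fintype.card α
    · exact mod_cast Nat.choose_pos h
    · omega
  have h := calc
    ∑ s ∈ 𝒜, ((Fintype.card α).choose t : ℚ)⁻¹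
    _ ≤ ∑ s ∈ 𝒜, ((Fintype.card α).choose #s : ℚ)⁻¹ := by
      gcongr with s hs
      · exact mod_cast Nat.choose_pos s.card_le_univ
      · exact choose_le_choose_of_le_ceil_half (hcard s hs) ht
    _ ≤ 1 := lubell_yamamoto_meshalkin_inequality_sum_inv_choose h𝒜
  rw [sum_const, nsmul_eq_mul, mul_inv_le_iff₀ pos, one_mul] at h
  exact mod_cast h

/-- The bound for a pair of antichains whose lower member has only sets of size less than `t`:
adjoining the new point `none` to the members of `P` makes a single antichain of `P` and `Q`. -/
lemma card_add_card_le_choose {n t : ℕ} (ht : t ≤ n / 2 + 1) (P Q : Finset (Finset (Fin n)))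
    (hP : IsAntichain (· ⊆ ·) (P : Set (Finset (Fin n))))
    (hQ : IsAntichain (· ⊆ ·) (Q : Set (Finset (Fin n))))
    (hPQ : ∀ a ∈ P, ∀ b ∈ Q, ¬ b ⊆ a) (hPt : ∀ a ∈ P, #a < t) (hQt : ∀ b ∈ Q, #b ≤ t) :
    #P + #Q ≤ (n + 1).choose t := by
  classical
  let up : Finset (Fin n) → Finset (Option (Fin n)) := fun s => insertNone s
  let lo : Finset (Fin n) → Finset (Option (Fin n)) := fun s => s.map Function.Embedding.some
  have up_le {a b} : up a ⊆ up b ↔ a ⊆ b :=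
    ⟨fun h x hx => by simpa [up] using @h (some x) (by simpa [up] using hx),
      fun h => insertNone.monotone h⟩
  have lo_le {a b} : lo a ⊆ lo b ↔ a ⊆ b := map_subset_map
  have lo_up {a b} : lo a ⊆ up b ↔ a ⊆ b := by
    simp [lo, up, subset_iff]
  have up_lo {a b} : ¬ up a ⊆ lo b := fun h => by
    have := @h none (by simp [up])
    simp [lo] at this
  have hcard : #(P.image up ∪ Q.image lo) = #P + #Q := by
    rw [card_union_of_disjoint, card_image_of_injective, card_image_of_injective]
    · exact map_injective _
    · exact insertNone.injective
    · rw [disjoint_left]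
      simp only [mem_image]
      rintro _ ⟨a, -, rfl⟩ ⟨b, -, h⟩
      exact up_lo h.ge
  have key := card_antichain_le_choose (α := Option (Fin n)) (t := t)
    (by simp only [Fintype.card_option, Fintype.card_fin]; omega)
    (P.image up ∪ Q.image lo) ?_ ?_
  · simpa only [hcard, Fintype.card_option, Fintype.card_fin] using key
  · intro x hx y hy hne hle
    simp only [coe_union, coe_image, Set.mem_union, Set.mem_image, mem_coe] at hx hy
    obtain ⟨a, ha, rfl⟩ | ⟨a, ha, rfl⟩ := hx <;> obtain ⟨b, hb, rfl⟩ | ⟨b, hb, rfl⟩ := hy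
    · exact hP ha hb (fun e => hne (e ▸ rfl)) (up_le.1 hle)
    · exact up_lo hle
    · exact hPQ b hb a ha (lo_up.1 hle)
    · exact hQ ha hb (fun e => hne (e ▸ rfl)) (lo_le.1 hle)
  · intro x hx
    simp only [mem_union, mem_image] at hx
    obtain ⟨a, ha, rfl⟩ | ⟨a, ha, rfl⟩ := hx
    · simpa [up, card_insertNone] using hPt a ha
    · simpa [lo] using hQt a ha

/-- The support of a binary tuple. -/
def tupleSupport {n : ℕ} (α : Fin n → Bool) : Finset (Fin n) := univ.filter fun i => α i = true

lemma card_tupleSupport {n : ℕ} (α : Fin n → Bool) : #(tupleSupport α) = bweight α := rfl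

lemma tupleSupport_subset {n : ℕ} {α β : Fin n → Bool} :
    tupleSupport α ⊆ tupleSupport β ↔ α ≤ β := by
  simp [tupleSupport, subset_iff, Pi.le_def, Bool.le_iff_imp]

lemma tupleSupport_injective {n : ℕ} : Function.Injective (tupleSupport (n := n)) :=
  fun _ _ h => le_antisymm (tupleSupport_subset.1 h.le) (tupleSupport_subset.1 h.ge)

lemma eq_of_le_of_bweight_le {n : ℕ} {α β : Fin n → Bool} (h : α ≤ β)
    (hw : bweight β ≤ bweight α) : α = β :=
  tupleSupport_injective (eq_of_subset_of_card_le (tupleSupport_subset.2 h) hw)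

/-- For any integer `t` with `1 ≤ t ≤ ⌊n/2⌋ + 1`, the
cardinality of any pair of antichains `(T', T'') ∈ 𝒜'_t` satisfies
`|T'| + |T''| ≤ C(n+1, t)`. -/
theorem card_pair_le_of_memA' {n t : ℕ} (ht1 : 1 ≤ t) (ht2 : t ≤ n / 2 + 1)
    (T' T'' : Set (Fin n → Bool)) (h : MemA' t T' T'') :
    T'.ncard + T''.ncard ≤ Nat.choose (n + 1) t := by
  classical
  obtain ⟨⟨hT', hT'', hlt⟩, hw⟩ := h
  have hw' : ∀ α ∈ T', bweight α ≤ t := fun α hα => hw α (Or.inl hα)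
  have hw'' : ∀ α ∈ T'', bweight α ≤ t := fun α hα => hw α (Or.inr hα)
  -- `P` is `T'` without its top layer, `R` is that layer, which joins `T''`.
  let P : Finset (Fin n → Bool) := T'.toFinset.filter fun α => bweight α < t
  let R : Finset (Fin n → Bool) := T'.toFinset.filter fun α => ¬ bweight α < t
  have hP {α} : α ∈ P ↔ α ∈ T' ∧ bweight α < t := by simp [P]
  have hR {α} : α ∈ R ↔ α ∈ T' ∧ ¬ bweight α < t := by simp [R]
  have hcP : #P + #R = T'.ncard := by
    rw [Set.ncard_eq_toFinset_card']
    exact card_filter_add_card_filter_not _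
  have hcQ : #(R ∪ T''.toFinset) = #R + T''.ncard := by
    rw [Set.ncard_eq_toFinset_card', card_union_of_disjoint]
    rw [disjoint_left]
    intro α h1 h2
    exact hlt α (hR.1 h1).1 α (by simpa using h2) le_rfl
  have key := card_add_card_le_choose ht2 (P.image tupleSupport)
    ((R ∪ T''.toFinset).image tupleSupport) ?_ ?_ ?_ ?_ ?_
  · rw [card_image_of_injective _ tupleSupport_injective,
      card_image_of_injective _ tupleSupport_injective] at key
    omega
  · rintro _ hx _ hy hne hle
    simp only [coe_image, Set.mem_image, mem_coe] at hx hy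
    obtain ⟨a, ha, rfl⟩ := hx
    obtain ⟨b, hb, rfl⟩ := hy
    exact hT' (hP.1 ha).1 (hP.1 hb).1 (fun e => hne (e ▸ rfl)) (tupleSupport_subset.1 hle)
  · rintro _ hx _ hy hne hle
    simp only [coe_image, Set.mem_image, mem_coe, mem_union, Set.mem_toFinset] at hx hy
    obtain ⟨a, ha, rfl⟩ := hx
    obtain ⟨b, hb, rfl⟩ := hy
    have hab : a ≠ b := fun e => hne (e ▸ rfl)
    have hle' := tupleSupport_subset.1 hle
    rcases ha with ha | ha <;> rcases hb with hb | hb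
    · exact hT' (hR.1 ha).1 (hR.1 hb).1 hab hle'
    · exact hab (eq_of_le_of_bweight_le hle' ((hw'' b hb).trans (not_lt.1 (hR.1 ha).2)))
    · exact hlt b (hR.1 hb).1 a ha hle'
    · exact hT'' ha hb hab hle'
  · intro x hx y hy hle
    simp only [mem_image, mem_union, Set.mem_toFinset] at hx hy
    obtain ⟨a, ha, rfl⟩ := hx
    obtain ⟨b, hb, rfl⟩ := hy
    rcases hb with hb | hb
    · -- A tuple of weight `t` cannot lie below one of smaller weight.
      have h1 : bweight b ≤ bweight a := card_le_card hle
      exact (hR.1 hb).2 (h1.trans_lt (hP.1 ha).2)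
    · exact hlt a (hP.1 ha).1 b hb (tupleSupport_subset.1 hle)
  · intro x hx
    obtain ⟨a, ha, rfl⟩ := mem_image.1 hx
    exact (hP.1 ha).2
  · intro x hx
    simp only [mem_image, mem_union, Set.mem_toFinset] at hx
    obtain ⟨a, ha | ha, rfl⟩ := hx
    · exact hw' a (hR.1 ha).1
    · exact hw'' a ha
end

section
/- For any integer t with 1 ≤ t ≤ ⌊n/2⌋ + 1, let T' = B^n_{t−1} (all tuples of weight t−1) and T'' = B^n_t (all tuples of weight t). Then (T', T'') ∈ 𝒜'_t and (T', T'') has the maximum cardinality among all pairs in 𝒜'_t. -/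
/-- The support (set of 1-positions) of a binary tuple; its cardinality is the weight by
definition. -/
def bsupp {n : ℕ} (α : Fin n → Bool) : Finset (Fin n) :=
  Finset.univ.filter fun i => α i = true

lemma bsupp_subset_iff {n : ℕ} {α β : Fin n → Bool} : bsupp α ⊆ bsupp β ↔ α ≤ β := by
  simp only [bsupp, Finset.subset_iff, Finset.mem_filter, Finset.mem_univ, true_and,
    Pi.le_def, Bool.le_iff_imp]

lemma bsupp_injective {n : ℕ} : Function.Injective (bsupp (n := n)) := fun _ _ h =>
  le_antisymm (bsupp_subset_iff.1 h.subset) (bsupp_subset_iff.1 h.symm.subset)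

lemma bweight_mono {n : ℕ} {α β : Fin n → Bool} (h : α ≤ β) : bweight α ≤ bweight β :=
  Finset.card_le_card (bsupp_subset_iff.2 h)

/-- Comparable tuples of equal weight coincide. -/
lemma eq_of_le_of_bweight_eq {n : ℕ} {α β : Fin n → Bool} (h : α ≤ β)
    (hw : bweight α = bweight β) : α = β :=
  bsupp_injective (Finset.eq_of_subset_of_card_le (bsupp_subset_iff.2 h) hw.ge)

lemma isAntichain_level {n : ℕ} (k : ℕ) :
    IsAntichain (· ≤ ·) {α : Fin n → Bool | bweight α = k} := by
  intro α hα β hβ hne hle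
  exact hne (eq_of_le_of_bweight_eq hle (hα.trans hβ.symm))

lemma card_level {n : ℕ} (k : ℕ) :
    (Finset.univ.filter fun α : Fin n → Bool => bweight α = k).card = n.choose k := by
  have h : (Finset.univ.filter fun α : Fin n → Bool => bweight α = k).image bsupp
      = Finset.powersetCard k Finset.univ := by
    ext s
    simp only [Finset.mem_image, Finset.mem_filter, Finset.mem_univ, true_and,
      Finset.mem_powersetCard, Finset.subset_univ]
    constructor
    · rintro ⟨α, hα, rfl⟩
      exact hα
    · intro hs
      have hb : bsupp (fun i => decide (i ∈ s)) = s := by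
        ext i
        simp [bsupp]
      exact ⟨fun i => decide (i ∈ s), (congrArg Finset.card hb).trans hs, hb⟩
  rw [← Finset.card_image_of_injective _ bsupp_injective, h, Finset.card_powersetCard,
    Finset.card_univ, Fintype.card_fin]

/-- The Lubell–Yamamoto–Meshalkin inequality for antichains of binary tuples. -/
lemma lym_bool {n : ℕ} (A : Finset (Fin n → Bool))
    (hA : IsAntichain (· ≤ ·) (A : Set (Fin n → Bool))) :
    ∑ α ∈ A, ((n.choose (bweight α) : ℕ) : ℚ)⁻¹ ≤ 1 := by
  have h : IsAntichain (· ⊆ ·) (SetLike.coe (A.image bsupp)) := by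
    intro s hs s' hs' hne hsub
    simp only [Finset.coe_image, Set.mem_image] at hs hs'
    obtain ⟨α, hα, rfl⟩ := hs
    obtain ⟨β, hβ, rfl⟩ := hs'
    exact hA hα hβ (fun h => hne (h ▸ rfl)) (bsupp_subset_iff.1 hsub)
  have := Finset.lubell_yamamoto_meshalkin_inequality_sum_inv_choose (𝕜 := ℚ) h
  rw [Finset.sum_image bsupp_injective.injOn, Fintype.card_fin] at this
  exact this

lemma choose_mono_half {n k l : ℕ} (hkl : k ≤ l) (hl : l ≤ n / 2) :
    n.choose k ≤ n.choose l := by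
  induction l, hkl using Nat.le_induction with
  | base => exact le_rfl
  | succ m _ ih => exact (ih (by omega)).trans (Nat.choose_le_succ_of_lt_half_left (by omega))

/-- For `t ≤ ⌊n/2⌋ + 1` the levels `t - 1` and `t` are both at least as large as every lower
level. When `t = ⌊n/2⌋ + 1` the bound for level `t` goes through the symmetric level `n - t`. -/
lemma choose_le_of_add_two_le {n k t : ℕ} (hk : k + 2 ≤ t) (ht : t ≤ n / 2 + 1) :
    n.choose k ≤ min (n.choose (t - 1)) (n.choose t) := by
  refine le_min (choose_mono_half (by omega) (by omega)) ?_
  by_cases h : t ≤ n / 2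
  · exact choose_mono_half (by omega) h
  · rw [← Nat.choose_symm (show t ≤ n by omega)]
    exact choose_mono_half (by omega) (by omega)

/-- If the reciprocal level sizes over `U` sum to at most `2` and `U` lives on levels `≤ t`,
then `U` is no larger than levels `t - 1` and `t` together. -/
lemma card_le_of_sum_inv_le_two {n t : ℕ} (ht1 : 1 ≤ t) (ht2 : t ≤ n / 2 + 1)
    (U : Finset (Fin n → Bool)) (hU : ∀ α ∈ U, bweight α ≤ t)
    (hsum : ∑ α ∈ U, ((n.choose (bweight α) : ℕ) : ℚ)⁻¹ ≤ 2) :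
    U.card ≤ n.choose (t - 1) + n.choose t := by
  set a := min (n.choose (t - 1)) (n.choose t) with ha
  set f : (Fin n → Bool) → ℚ := fun α => 1 - a * ((n.choose (bweight α) : ℕ) : ℚ)⁻¹ with hf
  set L : ℕ → Finset (Fin n → Bool) := fun k => Finset.univ.filter fun α => bweight α = k with hL
  have hpos : ∀ α : Fin n → Bool, (0 : ℚ) < (n.choose (bweight α) : ℕ) := fun α => by
    have h : bweight α ≤ n :=
      (Finset.card_le_univ (bsupp α)).trans_eq (Fintype.card_fin n)
    exact_mod_cast Nat.choose_pos h
  have hdisj : Disjoint (L (t - 1)) (L t) := by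
    rw [Finset.disjoint_left]
    intro α h1 h2
    simp only [hL, Finset.mem_filter, Finset.mem_univ, true_and] at h1 h2
    omega
  have hlow : ∀ α ∈ U, α ∉ L (t - 1) ∪ L t → f α ≤ 0 := by
    intro α hα hn
    simp only [hL, Finset.mem_union, Finset.mem_filter, Finset.mem_univ, true_and] at hn
    have hw := hU α hα
    have hc : ((n.choose (bweight α) : ℕ) : ℚ) ≤ a := by
      exact_mod_cast choose_le_of_add_two_le (by omega) ht2
    have := (one_le_div (hpos α)).2 hc
    rw [div_eq_mul_inv] at this
    simp only [hf]
    linarith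
  have hhigh : ∀ α ∈ L (t - 1) ∪ L t, 0 ≤ f α := by
    intro α hα
    simp only [hL, Finset.mem_union, Finset.mem_filter, Finset.mem_univ, true_and] at hα
    have hc : (a : ℚ) ≤ (n.choose (bweight α) : ℕ) := by
      rcases hα with h | h <;> rw [h]
      · exact_mod_cast min_le_left _ _
      · exact_mod_cast min_le_right _ _
    have := (div_le_one (hpos α)).2 hc
    rw [div_eq_mul_inv] at this
    simp only [hf]
    linarith
  -- An empty level `t` (`n = 0`, `t = 1`) has `a = 0`, so the formula holds there too.
  have hlevel : ∀ k, a ≤ n.choose k → ∑ α ∈ L k, f α = (n.choose k : ℚ) - a := by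
    intro k hk
    have h1 : ∑ α ∈ L k, f α = ∑ α ∈ L k, (1 - (a : ℚ) * ((n.choose k : ℕ) : ℚ)⁻¹) := by
      refine Finset.sum_congr rfl fun α hα => ?_
      simp only [hL, Finset.mem_filter, Finset.mem_univ, true_and] at hα
      simp only [hf, hα]
    rw [h1, Finset.sum_const, card_level, nsmul_eq_mul]
    rcases Nat.eq_zero_or_pos (n.choose k) with h0 | h0
    · have : a = 0 := by omega
      simp [h0, this]
    · have : (n.choose k : ℚ) ≠ 0 := by positivity
      field_simp
  have hle : ∑ α ∈ U, f α ≤ ∑ α ∈ L (t - 1) ∪ L t, f α := by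
    rw [← Finset.sum_filter_add_sum_filter_not U (· ∈ L (t - 1) ∪ L t)]
    have h1 : ∑ α ∈ U.filter (· ∉ L (t - 1) ∪ L t), f α ≤ 0 :=
      Finset.sum_nonpos fun α hα => by
        rw [Finset.mem_filter] at hα
        exact hlow α hα.1 hα.2
    have h2 : ∑ α ∈ U.filter (· ∈ L (t - 1) ∪ L t), f α ≤ ∑ α ∈ L (t - 1) ∪ L t, f α :=
      Finset.sum_le_sum_of_subset_of_nonneg
        (fun α hα => (Finset.mem_filter.1 hα).2) fun α hα _ => hhigh α hα
    linarith
  rw [Finset.sum_union hdisj, hlevel _ (min_le_left _ _), hlevel _ (min_le_right _ _)] at hle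
  have hexp : ∑ α ∈ U, f α
      = U.card - a * ∑ α ∈ U, ((n.choose (bweight α) : ℕ) : ℚ)⁻¹ := by
    simp only [hf, Finset.sum_sub_distrib, Finset.mul_sum, Finset.sum_const, nsmul_eq_mul, mul_one]
  have hmul := mul_le_mul_of_nonneg_left hsum (Nat.cast_nonneg (α := ℚ) a)
  have : (U.card : ℚ) ≤ n.choose (t - 1) + n.choose t := by linarith
  exact_mod_cast this

lemma ncard_level {n : ℕ} (k : ℕ) :
    {α : Fin n → Bool | bweight α = k}.ncard = n.choose k := by
  rw [← card_level, ← Set.ncard_coe_finset]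
  congr 1
  ext α
  simp

/-- For any integer `t` with `1 ≤ t ≤ ⌊n/2⌋ + 1`, let
`T' = Bⁿ_{t−1}` (all tuples of weight `t − 1`) and `T'' = Bⁿ_t` (all tuples of
weight `t`). Then `(T', T'') ∈ 𝒜'_t` and `(T', T'')` has the maximum
cardinality among all pairs in `𝒜'_t`. -/
theorem explicit_max_pair_in_A' {n t : ℕ} (ht1 : 1 ≤ t) (ht2 : t ≤ n / 2 + 1) :
    MemA' t {α : Fin n → Bool | bweight α = t - 1}
      {α : Fin n → Bool | bweight α = t} ∧
    ∀ U' U'' : Set (Fin n → Bool), MemA' t U' U'' →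
      U'.ncard + U''.ncard ≤
        {α : Fin n → Bool | bweight α = t - 1}.ncard +
        {α : Fin n → Bool | bweight α = t}.ncard := by
  classical
  refine ⟨⟨⟨isAntichain_level _, isAntichain_level _, ?_⟩, ?_⟩, ?_⟩
  · intro α hα β hβ hle
    have := bweight_mono hle
    simp only [Set.mem_ofPred_eq] at hα hβ
    omega
  · rintro α (hα | hα) <;> simp only [Set.mem_ofPred_eq] at hα <;> omega
  · rintro U' U'' ⟨⟨h', h'', hlt⟩, hw⟩
    rw [ncard_level, ncard_level]
    lift U' to Finset (Fin n → Bool) using U'.toFinite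
    lift U'' to Finset (Fin n → Bool) using U''.toFinite
    have hdisj : Disjoint U' U'' :=
      Finset.disjoint_left.2 fun α h1 h2 => hlt α h1 α h2 le_rfl
    rw [Set.ncard_coe_finset, Set.ncard_coe_finset, ← Finset.card_union_of_disjoint hdisj]
    refine card_le_of_sum_inv_le_two ht1 ht2 _ (fun α hα => hw α (by simpa using hα)) ?_
    rw [Finset.sum_union hdisj]
    linarith [lym_bool U' h', lym_bool U'' h'']
end
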